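/- arXiv:1505.05496 — 2 statements merged into one kernel-verified Lean document; each statement's English description precedes it below -/
import Mathlib

section
/- Let G ∈ Cact(n;t) with t ≥ 2 be a cactus without cut edges, let C be an end cycle of G and v its anchor, and let u be a vertex of C different from v. Let G1 and G2 be the graphs obtained from G by adding r ≥ 1 pendent edges to the vertex u and to the vertex v, respectively. Then D_R(G1) > D_R(G2). -/
open Finset

/-- Effective resistance between two vertices of a graph (for a connected graph
this is the effective resistance when every edge is a unit resistor), defined via
the matrix-tree / spanning-two-forest determinant formula. -/
noncomputable def effRes {V : Type*} [Finite V] (G : SimpleGraph V) (u v : V) : ℝ :=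
  letI := Fintype.ofFinite V
  letI := Classical.decEq V
  letI : DecidableRel G.Adj := Classical.decRel _
  if u = v then 0
  else
    Matrix.det ((G.lapMatrix ℝ).submatrix
        (fun w : {w : V // w ≠ u ∧ w ≠ v} => (w : V)) (fun w => (w : V)))
      / Matrix.det ((G.lapMatrix ℝ).submatrix
        (fun w : {w : V // w ≠ u} => (w : V)) (fun w => (w : V)))

/-- The degree resistance distance `D_R(G) = Σ_{ {u,v} ⊆ V } (d(u)+d(v)) R(u,v)`. -/
noncomputable def degRes {V : Type*} [Finite V] (G : SimpleGraph V) : ℝ :=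
  letI := Fintype.ofFinite V
  letI := Classical.decEq V
  letI : DecidableRel G.Adj := Classical.decRel _
  (1 / 2) * ∑ u : V, ∑ v : V, ((G.degree u : ℝ) + (G.degree v : ℝ)) * effRes G u v

/-- The Kirchhoff index `Kf(G) = Σ_{ {u,v} ⊆ V } R(u,v)`. -/
noncomputable def kirchhoffIndex {V : Type*} [Finite V] (G : SimpleGraph V) : ℝ :=
  letI := Fintype.ofFinite V
  (1 / 2) * ∑ u : V, ∑ v : V, effRes G u v

/-- `Kf_v(G) = Σ_{u ∈ V} R(u,v)`. -/
noncomputable def Kfv {V : Type*} [Finite V] (G : SimpleGraph V) (v : V) : ℝ :=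
  letI := Fintype.ofFinite V
  ∑ u : V, effRes G u v

/-- `D_v(G) = Σ_{u ∈ V} d(u) R(u,v)`. -/
noncomputable def Dv {V : Type*} [Finite V] (G : SimpleGraph V) (v : V) : ℝ :=
  letI := Fintype.ofFinite V
  letI := Classical.decEq V
  letI : DecidableRel G.Adj := Classical.decRel _
  ∑ u : V, (G.degree u : ℝ) * effRes G u v

/-- A subgraph is a cycle if it is connected and `2`-regular. -/
def IsCycleSubgraph {V : Type*} {G : SimpleGraph V} (H : G.Subgraph) : Prop :=
  H.coe.Connected ∧ ∀ v ∈ H.verts, {u | H.Adj v u}.ncard = 2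

/-- A cactus is a connected graph in which any two distinct cycles share at most
one vertex (equivalently, every block is an edge or a cycle). -/
def IsCactus {V : Type*} (G : SimpleGraph V) : Prop :=
  G.Connected ∧ ∀ H₁ H₂ : G.Subgraph, IsCycleSubgraph H₁ → IsCycleSubgraph H₂ →
    H₁ ≠ H₂ → (H₁.verts ∩ H₂.verts).ncard ≤ 1

/-- The number of cycles of a graph. -/
noncomputable def numCycles {V : Type*} (G : SimpleGraph V) : ℕ :=
  {H : G.Subgraph | IsCycleSubgraph H}.ncard

/-- `G ∈ Cact(n;t)`: `G` is a cactus with `n` vertices and `t` cycles. -/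
def MemCact {V : Type*} (n t : ℕ) (G : SimpleGraph V) : Prop :=
  IsCactus G ∧ Nat.card V = n ∧ numCycles G = t

/-- `G⁰(n,t)`: `t` triangles (on vertices `2i+1, 2i+2`, `i < t`) and `n - 2t - 1`
pendent edges, all sharing the common vertex `0`. -/
def G0 (n t : ℕ) : SimpleGraph (Fin n) :=
  SimpleGraph.fromRel (fun a b =>
    a.val = 0 ∨ (Odd a.val ∧ b.val = a.val + 1 ∧ b.val ≤ 2 * t))

/-- The graph obtained from `G` by attaching `r` new pendent vertices to `w`. -/
def addPendents {V : Type*} (G : SimpleGraph V) (w : V) (r : ℕ) :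
    SimpleGraph (V ⊕ Fin r) :=
  SimpleGraph.fromRel (fun a b =>
    (∃ x y, a = Sum.inl x ∧ b = Sum.inl y ∧ G.Adj x y) ∨
    (a = Sum.inl w ∧ ∃ i : Fin r, b = Sum.inr i))

/-!
By Kirchhoff's and Ohm's laws, `R(a, b) = f a - f b` for every solution `f` of the Poisson equation
`L f = δ_a - δ_b`. Attaching `r` pendent edges at `w` changes `D_R` by `r (D_w + 2 Kf_w)` plus a
quantity independent of `w`, and `D_w + 2 Kf_w = ∑ x, (d(x) + 2) R(x, w)`.

Pass from the anchor `v` to `u`. Every vertex outside the end cycle `C` becomes farther by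
`R(u, v)`. On `C` the weight `d(x) + 2` is `4` except at `v`, where it is larger, and resistances
are those of the cycle alone, for which `∑ x, R(x, w)` does not depend on `w`. The latter holds
because the Laplacian of `w ↦ ∑ x, R(x, w)` is `2 (n - 1) - n ∑_{y ~ w} R(w, y)`: on a connected
`2`-regular graph this is constant, hence zero, since the values of `L f` always sum to zero.
-/

section Laplacian

open Matrix

variable {V R : Type*} [Fintype V] [DecidableEq V] {G : SimpleGraph V} [DecidableRel G.Adj]

lemma lapMatrix_mulVec_apply_eq_sum_sub [NonAssocRing R] (f : V → R) (x : V) :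
    (G.lapMatrix R *ᵥ f) x = ∑ y ∈ G.neighborFinset x, (f x - f y) := by
  rw [SimpleGraph.lapMatrix_mulVec_apply, sum_sub_distrib, sum_const,
    SimpleGraph.card_neighborFinset_eq_degree, nsmul_eq_mul]

lemma lapMatrix_mulVec_apply_congr [NonAssocRing R] {f g : V → R} {x : V}
    (h : ∀ y, G.Adj x y → f x - f y = g x - g y) :
    (G.lapMatrix R *ᵥ f) x = (G.lapMatrix R *ᵥ g) x := by
  simp only [lapMatrix_mulVec_apply_eq_sum_sub]
  exact sum_congr rfl fun y hy => h y ((G.mem_neighborFinset x y).1 hy)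

lemma lapMatrix_mulVec_apply_eq_zero [NonAssocRing R] {f : V → R} {x : V}
    (h : ∀ y, G.Adj x y → f x = f y) : (G.lapMatrix R *ᵥ f) x = 0 := by
  rw [lapMatrix_mulVec_apply_eq_sum_sub]
  exact sum_eq_zero fun y hy => sub_eq_zero.2 (h y ((G.mem_neighborFinset x y).1 hy))

lemma dotProduct_lapMatrix_mulVec_comm [CommRing R] (f g : V → R) :
    f ⬝ᵥ (G.lapMatrix R *ᵥ g) = g ⬝ᵥ (G.lapMatrix R *ᵥ f) := by
  rw [dotProduct_mulVec, ← mulVec_transpose, (SimpleGraph.isSymm_lapMatrix R G).eq, dotProduct_comm]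

lemma sum_lapMatrix_mulVec_apply [CommRing R] (f : V → R) :
    ∑ x, (G.lapMatrix R *ᵥ f) x = 0 := by
  rw [← one_dotProduct, dotProduct_lapMatrix_mulVec_comm]
  exact (congrArg (f ⬝ᵥ ·) G.lapMatrix_mulVec_const_eq_zero).trans (dotProduct_zero f)

lemma eq_of_lapMatrix_mulVec_eq_zero (hG : G.Connected) {f : V → ℝ}
    (h : G.lapMatrix ℝ *ᵥ f = 0) (a b : V) : f a = f b :=
  (SimpleGraph.lapMatrix_mulVec_eq_zero_iff_forall_reachable G).1 h a b (hG.preconnected a b)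

end Laplacian

section UnitPotential

open Matrix

variable {V : Type*} [Fintype V] [DecidableEq V] {G : SimpleGraph V} [DecidableRel G.Adj]

variable (G) in
/-- `f` is an electric potential on `G` (unit resistors) driving a unit current that enters at `a`
and leaves at `b`. By Kirchhoff's and Ohm's laws this is the Poisson equation `L f = δ_a - δ_b`. -/
def IsUnitPotential (a b : V) (f : V → ℝ) : Prop :=
  G.lapMatrix ℝ *ᵥ f = Pi.single a 1 - Pi.single b 1

variable {a b c d : V} {f g : V → ℝ}

namespace IsUnitPotential

/-- The Laplacian of any function has total mass zero, so the equation at `c` follows from the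
equations at all other vertices. -/
lemma of_forall_ne (c : V) (h : ∀ x ≠ c, (G.lapMatrix ℝ *ᵥ f) x =
      (Pi.single a 1 : V → ℝ) x - (Pi.single b 1 : V → ℝ) x) :
    IsUnitPotential G a b f := by
  have hsum : ∑ x, ((G.lapMatrix ℝ *ᵥ f) x -
      ((Pi.single a 1 : V → ℝ) x - (Pi.single b 1 : V → ℝ) x)) = 0 := by
    simp [sum_sub_distrib, sum_lapMatrix_mulVec_apply]
  rw [Fintype.sum_eq_single c fun x hx => sub_eq_zero.2 (h x hx)] at hsum
  funext x
  rcases eq_or_ne x c with rfl | hx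
  · exact sub_eq_zero.1 hsum
  · exact h x hx

lemma neg (hf : IsUnitPotential G a b f) : IsUnitPotential G b a (-f) := by
  rw [IsUnitPotential, mulVec_neg, hf, neg_sub]

lemma sub (hf : IsUnitPotential G a b f) (hg : IsUnitPotential G a c g) :
    IsUnitPotential G c b (f - g) := by
  rw [IsUnitPotential, mulVec_sub, hf, hg, sub_sub_sub_cancel_left]

lemma sub_const (hf : IsUnitPotential G a b f) (t : ℝ) :
    IsUnitPotential G a b (fun x => f x - t) := by
  funext x
  rw [lapMatrix_mulVec_apply_congr (g := f) fun y _ => sub_sub_sub_cancel_right _ _ t, hf]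

lemma dotProduct_lapMatrix_mulVec (hf : IsUnitPotential G a b f) (g : V → ℝ) :
    g ⬝ᵥ (G.lapMatrix ℝ *ᵥ f) = g a - g b := by
  rw [hf, dotProduct_sub, dotProduct_single_one, dotProduct_single_one]

lemma reciprocity (hf : IsUnitPotential G a b f) (hg : IsUnitPotential G c d g) :
    g a - g b = f c - f d := by
  rw [← hf.dotProduct_lapMatrix_mulVec, dotProduct_lapMatrix_mulVec_comm,
    hg.dotProduct_lapMatrix_mulVec]

lemma potential_drop_pos (hf : IsUnitPotential G a b f) (hab : a ≠ b) : 0 < f a - f b := by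
  have henergy := hf.dotProduct_lapMatrix_mulVec f
  have hpsd := SimpleGraph.posSemidef_lapMatrix ℝ G
  have hnonneg := hpsd.dotProduct_mulVec_nonneg f
  rw [star_trivial, henergy] at hnonneg
  refine hnonneg.lt_of_ne' fun hzero => ?_
  have hharm : G.lapMatrix ℝ *ᵥ f = 0 :=
    (hpsd.dotProduct_mulVec_zero_iff f).1 (by rw [star_trivial, henergy, hzero])
  have : (G.lapMatrix ℝ *ᵥ f) a = 1 := by
    rw [hf]; simp [hab]
  simp [hharm] at this

end IsUnitPotential

end UnitPotential

section ReducedLaplacian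

open Matrix

lemma adjugate_apply_self {n R : Type*} [Fintype n] [DecidableEq n] [CommRing R]
    (M : Matrix n n R) (i : n) :
    M.adjugate i i = (M.submatrix ((↑) : {j // j ≠ i} → n) (↑)).det := by
  rw [adjugate_apply, twoBlockTriangular_det _ (· ≠ i)]
  · have hone : (M.updateRow i (Pi.single i 1)).toSquareBlockProp (¬ · ≠ i) = 1 := by
      ext ⟨j, hj⟩ ⟨k, hk⟩
      obtain rfl := not_not.1 hj
      obtain rfl := not_not.1 hk
      simp [toSquareBlockProp]
    rw [hone, det_one, mul_one]
    congr 1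
    ext j k
    simp [toSquareBlockProp, j.2]
  · intro j hj k hk
    obtain rfl := not_not.1 hj
    simp [hk]

lemma exists_extension_by_zero {α R : Type*} [Zero R] {a : α} (g : {x // x ≠ a} → R) :
    ∃ f : α → R, f a = 0 ∧ (fun x : {x // x ≠ a} => f x) = g :=
  ⟨Function.extend (↑) g 0, Function.extend_apply' _ _ _ fun ⟨x, hx⟩ => x.2 hx,
    Function.extend_comp Subtype.val_injective g 0⟩

variable {V : Type*} [Fintype V] [DecidableEq V] {G : SimpleGraph V} [DecidableRel G.Adj] {a b : V}
  {f : V → ℝ}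

variable (G) in
/-- The Laplacian matrix of `G` with the row and the column of the grounded vertex `a` deleted. -/
def reducedLapMatrix (a : V) : Matrix {x // x ≠ a} {x // x ≠ a} ℝ :=
  (G.lapMatrix ℝ).submatrix (↑) (↑)

lemma reducedLapMatrix_mulVec (hfa : f a = 0) (x : {x // x ≠ a}) :
    (reducedLapMatrix G a *ᵥ fun y => f y) x = (G.lapMatrix ℝ *ᵥ f) x := by
  have h := Fintype.sum_subtype_add_sum_subtype (· ≠ a) fun y => G.lapMatrix ℝ x y * f y
  have hgrounded (y : {y // ¬ y ≠ a}) : G.lapMatrix ℝ x y * f y = 0 := by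
    rw [not_not.1 y.2, hfa, mul_zero]
  rwa [Fintype.sum_eq_zero _ hgrounded, add_zero] at h

lemma det_reducedLapMatrix_ne_zero (hG : G.Connected) (a : V) :
    (reducedLapMatrix G a).det ≠ 0 := by
  intro hdet
  obtain ⟨g, hg, hker⟩ := exists_mulVec_eq_zero_iff.2 hdet
  obtain ⟨f, hfa, rfl⟩ := exists_extension_by_zero g
  have hf : IsUnitPotential G a a f := .of_forall_ne a fun x hx => by
    rw [← reducedLapMatrix_mulVec hfa ⟨x, hx⟩, hker, sub_self, Pi.zero_apply]
  rw [IsUnitPotential, sub_self] at hf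
  exact hg (funext fun x => (eq_of_lapMatrix_mulVec_eq_zero hG hf x a).trans hfa)

lemma exists_isUnitPotential (hG : G.Connected) (a b : V) : ∃ f, IsUnitPotential G a b f := by
  have hunit := (det_reducedLapMatrix_ne_zero hG a).isUnit
  let source : {x // x ≠ a} → ℝ :=
    fun x => (Pi.single a 1 : V → ℝ) x - (Pi.single b 1 : V → ℝ) x
  obtain ⟨f, hfa, hf⟩ := exists_extension_by_zero ((reducedLapMatrix G a)⁻¹ *ᵥ source)
  refine ⟨f, .of_forall_ne a fun x hx => ?_⟩
  rw [← reducedLapMatrix_mulVec hfa ⟨x, hx⟩, hf, mulVec_mulVec, mul_nonsing_inv _ hunit,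
    one_mulVec]

end ReducedLaplacian

section EffectiveResistance

open Matrix

variable {V : Type*}

@[simp]
lemma effRes_self [Finite V] (G : SimpleGraph V) (a : V) : effRes G a a = 0 := by
  simp [effRes]

lemma effRes_eq_adjugate_div_det [Fintype V] [DecidableEq V] (G : SimpleGraph V)
    [DecidableRel G.Adj] {a b : V} (hba : b ≠ a) :
    effRes G a b = (reducedLapMatrix G a).adjugate ⟨b, hba⟩ ⟨b, hba⟩ /
      (reducedLapMatrix G a).det := by
  let e : {x // x ≠ a ∧ x ≠ b} ≃ {x : {x // x ≠ a} // x ≠ ⟨b, hba⟩} :=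
    { toFun := fun x => ⟨⟨x, x.2.1⟩, fun h => x.2.2 (congrArg Subtype.val h)⟩
      invFun := fun x => ⟨x, x.1.2, fun h => x.2 (Subtype.ext h)⟩ }
  rw [adjugate_apply_self, ← det_submatrix_equiv_self e, effRes, if_neg hba.symm]
  simp only [reducedLapMatrix, submatrix_submatrix]
  congr!

lemma IsUnitPotential.effRes_eq [Fintype V] [DecidableEq V] {G : SimpleGraph V}
    [DecidableRel G.Adj] {a b : V} {f : V → ℝ} (hf : IsUnitPotential G a b f)
    (hG : G.Connected) : effRes G a b = f a - f b := by
  rcases eq_or_ne b a with rfl | hba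
  · rw [effRes_self, sub_self]
  set M := reducedLapMatrix G a
  set b' : {x // x ≠ a} := ⟨b, hba⟩
  let g : {x // x ≠ a} → ℝ := fun x => f x - f a
  have hg : M *ᵥ g = -Pi.single b' 1 := by
    funext x
    rw [reducedLapMatrix_mulVec (f := fun x => f x - f a) (sub_self _), hf.sub_const (f a)]
    simp [b', x.2, Pi.single_apply, Subtype.ext_iff]
  have hcramer : M.det * g b' = -M.adjugate b' b' := by
    have h := congrFun (congrArg (M.adjugate *ᵥ ·) hg) b'
    simpa [mulVec_mulVec, adjugate_mul, smul_mulVec, mulVec_neg] using h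
  rw [effRes_eq_adjugate_div_det G hba, div_eq_iff (det_reducedLapMatrix_ne_zero hG a)]
  linear_combination hcramer

variable [Finite V] {G : SimpleGraph V}

lemma effRes_comm (hG : G.Connected) (a b : V) : effRes G a b = effRes G b a := by
  classical
  have := Fintype.ofFinite V
  obtain ⟨f, hf⟩ := exists_isUnitPotential hG a b
  rw [hf.effRes_eq hG, hf.neg.effRes_eq hG, Pi.neg_apply, Pi.neg_apply, neg_sub_neg]

lemma effRes_pos (hG : G.Connected) {a b : V} (hab : a ≠ b) : 0 < effRes G a b := by
  classical
  have := Fintype.ofFinite V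
  obtain ⟨f, hf⟩ := exists_isUnitPotential hG a b
  rw [hf.effRes_eq hG]
  exact hf.potential_drop_pos hab

lemma effRes_nonneg (hG : G.Connected) (a b : V) : 0 ≤ effRes G a b := by
  rcases eq_or_ne a b with rfl | hab
  · rw [effRes_self]
  · exact (effRes_pos hG hab).le

/-- No current flows in the part of `G` that the retraction `ρ` collapses. -/
lemma effRes_map_of_retraction {W : Type*} [Finite W] {H : SimpleGraph W} (hG : G.Connected)
    (hH : H.Connected) (ι : H ↪g G) {ρ : V → W} (hρ : Function.LeftInverse ρ ι)
    (hcollapse : ∀ x ∉ Set.range ι, ∀ y, G.Adj x y → ρ x = ρ y) (a b : W) :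
    effRes G (ι a) (ι b) = effRes H a b := by
  classical
  have := Fintype.ofFinite V
  have := Fintype.ofFinite W
  obtain ⟨f, hf⟩ := exists_isUnitPotential hH a b
  have hlift : IsUnitPotential G (ι a) (ι b) (f ∘ ρ) := by
    funext x
    by_cases hx : x ∈ Set.range ι
    · obtain ⟨w, rfl⟩ := hx
      trans (H.lapMatrix ℝ *ᵥ f) w
      · simp only [lapMatrix_mulVec_apply_eq_sum_sub, SimpleGraph.neighborFinset_eq_filter,
          sum_filter, Function.comp_apply]
        symm
        refine Fintype.sum_of_injective ι ι.injective _ _ (fun y hy => ?_) fun y => ?_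
        · exact ite_eq_right_iff.2 fun h =>
            sub_eq_zero.2 (congrArg f (hcollapse y hy _ h.symm).symm)
        · simp only [hρ w, hρ y, ι.map_adj_iff]
      · rw [hf]
        simp [Pi.single_apply, ι.injective.eq_iff]
    · rw [lapMatrix_mulVec_apply_eq_zero (f := f ∘ ρ)
        fun y hxy => congrArg f (hcollapse x hx y hxy)]
      have hne (w : W) : x ≠ ι w := fun h => hx ⟨w, h.symm⟩
      simp [hne]
  rw [hlift.effRes_eq hG, hf.effRes_eq hH, Function.comp_apply, Function.comp_apply, hρ, hρ]

/-- The potential for the current from `a` to `b` is glued, along the cut vertex `v`, from one that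
is constant off `S` and one that is constant on `S`. -/
lemma effRes_eq_add_of_cut_vertex (hG : G.Connected) {S : Set V} {v : V} (hv : v ∈ S)
    (hcut : ∀ x ∈ S, ∀ y ∉ S, G.Adj x y → x = v) {a b : V} (ha : a ∈ S) (hb : b ∉ S) :
    effRes G a b = effRes G a v + effRes G v b := by
  classical
  have := Fintype.ofFinite V
  obtain ⟨f, hf⟩ := exists_isUnitPotential hG a v
  obtain ⟨g, hg⟩ := exists_isUnitPotential hG v b
  have hglue : IsUnitPotential G a b fun x => if x ∈ S then f x - f v else g x - g v := by
    refine .of_forall_ne v fun x hxv => ?_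
    by_cases hx : x ∈ S
    · rw [lapMatrix_mulVec_apply_congr (g := f), hf]
      · simp [hxv, ne_of_mem_of_not_mem hx hb]
      · intro y hxy
        have hy : y ∈ S := by_contra fun hy => hxv (hcut x hx y hy hxy)
        rw [if_pos hx, if_pos hy, sub_sub_sub_cancel_right]
    · rw [lapMatrix_mulVec_apply_congr (g := g), hg]
      · simp [hxv, (ne_of_mem_of_not_mem ha hx).symm]
      · intro y hxy
        by_cases hy : y ∈ S
        · obtain rfl := hcut y hy x hx hxy.symm
          rw [if_neg hx, if_pos hy, sub_self, sub_zero]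
        · rw [if_neg hx, if_neg hy, sub_sub_sub_cancel_right]
  rw [hglue.effRes_eq hG, hf.effRes_eq hG, hg.effRes_eq hG, if_pos ha, if_neg hb]
  ring

lemma effRes_leaf (hG : G.Connected) {b w : V} (hb : ∀ y, G.Adj b y ↔ y = w) {x : V}
    (hx : x ≠ b) : effRes G x b = effRes G x w + 1 := by
  classical
  have := Fintype.ofFinite V
  obtain ⟨f, hf⟩ := exists_isUnitPotential hG x w
  have hwb : w ≠ b := (G.ne_of_adj ((hb w).2 rfl)).symm
  have hext : IsUnitPotential G x b (Function.update f b (f w - 1)) := by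
    refine .of_forall_ne w fun y hyw => ?_
    rcases eq_or_ne y b with rfl | hyb
    · have hN : G.neighborFinset y = {w} := by ext; simp [hb]
      rw [lapMatrix_mulVec_apply_eq_sum_sub, hN]
      simp [hwb, hx]
    · rw [lapMatrix_mulVec_apply_congr (g := f), hf]
      · simp [hyw, hyb]
      · intro z hyz
        have hzb : z ≠ b := by
          rintro rfl
          exact hyw ((hb y).1 hyz.symm)
        rw [Function.update_of_ne hyb, Function.update_of_ne hzb]
  rw [hext.effRes_eq hG, hf.effRes_eq hG, Function.update_of_ne hx, Function.update_self]
  ring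

end EffectiveResistance

section Transmission

open Matrix

section Sums

variable {V : Type*}

lemma Kfv_eq_sum [Fintype V] (G : SimpleGraph V) (v : V) : Kfv G v = ∑ x, effRes G x v := by
  unfold Kfv
  congr!

lemma Kfv_leaf [Finite V] {G : SimpleGraph V} (hG : G.Connected) {b w : V}
    (hb : ∀ y, G.Adj b y ↔ y = w) :
    Kfv G b = Kfv G w + Nat.card V - 2 := by
  classical
  have := Fintype.ofFinite V
  have hbw : effRes G b w = 1 := by
    rw [effRes_comm hG, effRes_leaf hG hb (G.ne_of_adj ((hb w).2 rfl)).symm, effRes_self, zero_add]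
  have hshift (x : V) : effRes G x b = effRes G x w + 1 - 2 * (Pi.single b 1 : V → ℝ) x := by
    rcases eq_or_ne x b with rfl | hx
    · rw [effRes_self, hbw, Pi.single_eq_same]
      norm_num
    · rw [effRes_leaf hG hb hx, Pi.single_eq_of_ne hx, mul_zero, sub_zero]
  rw [Kfv_eq_sum, Kfv_eq_sum]
  simp [hshift, sum_add_distrib, ← mul_sum]

variable [Fintype V] {G : SimpleGraph V} [DecidableRel G.Adj]

variable (G) in
lemma Dv_eq_sum (v : V) : Dv G v = ∑ x, (G.degree x : ℝ) * effRes G x v := by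
  unfold Dv
  congr!

lemma degRes_eq_sum_degree_mul_Kfv (hG : G.Connected) :
    degRes G = ∑ x, (G.degree x : ℝ) * Kfv G x := by
  have hdef : degRes G =
      1 / 2 * ∑ x, ∑ y, ((G.degree x : ℝ) + (G.degree y : ℝ)) * effRes G x y := by
    unfold degRes
    congr!
  have hleft : ∑ x, ∑ y, (G.degree x : ℝ) * effRes G x y = ∑ x, (G.degree x : ℝ) * Kfv G x := by
    simp only [← mul_sum, Kfv_eq_sum, effRes_comm hG]
  have hright : ∑ x, ∑ y, (G.degree y : ℝ) * effRes G x y = ∑ x, (G.degree x : ℝ) * Kfv G x := by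
    rw [sum_comm]
    simp only [← mul_sum, Kfv_eq_sum]
  rw [hdef]
  simp only [add_mul, sum_add_distrib]
  rw [hleft, hright]
  ring

end Sums

section Laplacian

variable {V : Type*} [Fintype V] [DecidableEq V] {G : SimpleGraph V} [DecidableRel G.Adj]

lemma IsUnitPotential.two_mul_sub_apply {a b : V} {f : V → ℝ} (hf : IsUnitPotential G a b f)
    (hG : G.Connected) (x : V) :
    2 * (f a - f x) = effRes G a b + effRes G a x - effRes G x b := by
  obtain ⟨g, hg⟩ := exists_isUnitPotential hG a x
  rw [hf.effRes_eq hG, hg.effRes_eq hG, (hf.sub hg).effRes_eq hG, Pi.sub_apply, Pi.sub_apply]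
  linear_combination -hf.reciprocity hg

lemma lapMatrix_mulVec_effRes (hG : G.Connected) (b w : V) :
    (G.lapMatrix ℝ *ᵥ fun x => effRes G x b) w =
      2 * (1 - (Pi.single b 1 : V → ℝ) w) - ∑ y ∈ G.neighborFinset w, effRes G w y := by
  obtain ⟨f, hf⟩ := exists_isUnitPotential hG w b
  have hsource : ∑ y ∈ G.neighborFinset w, (f w - f y) = 1 - (Pi.single b 1 : V → ℝ) w := by
    rw [← lapMatrix_mulVec_apply_eq_sum_sub, hf, Pi.sub_apply, Pi.single_eq_same]
  rw [lapMatrix_mulVec_apply_eq_sum_sub, ← hsource, mul_sum, ← sum_sub_distrib]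
  refine sum_congr rfl fun y _ => ?_
  rw [hf.two_mul_sub_apply hG]
  ring

lemma lapMatrix_mulVec_Kfv (hG : G.Connected) (w : V) :
    (G.lapMatrix ℝ *ᵥ Kfv G) w =
      2 * (Fintype.card V - 1) - Fintype.card V * ∑ y ∈ G.neighborFinset w, effRes G w y := by
  have hKfv : Kfv G = ∑ b, fun x => effRes G x b := by
    funext x
    rw [Kfv_eq_sum, Finset.sum_apply]
    exact sum_congr rfl fun b _ => effRes_comm hG b x
  rw [hKfv, mulVec_sum, Finset.sum_apply]
  simp only [lapMatrix_mulVec_effRes hG]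
  simp [sum_sub_distrib, ← mul_sum, Pi.single_apply]

lemma effRes_eq_of_neighborFinset_eq_pair (hG : G.Connected) {w a b : V} (hab : a ≠ b)
    (hw : G.neighborFinset w = {a, b}) : effRes G w a = effRes G w b := by
  have hsource {c : V} {f : V → ℝ} (hf : IsUnitPotential G w c f) (hc : G.Adj w c) :
      (f w - f a) + (f w - f b) = 1 := by
    rw [← sum_pair (f := fun y => f w - f y) hab, ← hw, ← lapMatrix_mulVec_apply_eq_sum_sub, hf]
    simp [G.ne_of_adj hc]
  have ha : G.Adj w a := by simp [← G.mem_neighborFinset, hw]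
  have hb : G.Adj w b := by simp [← G.mem_neighborFinset, hw]
  obtain ⟨f, hf⟩ := exists_isUnitPotential hG w a
  obtain ⟨g, hg⟩ := exists_isUnitPotential hG w b
  rw [hf.effRes_eq hG, hg.effRes_eq hG]
  linear_combination hsource hf ha - hsource hg hb + hf.reciprocity hg

end Laplacian

section Regular

variable {V : Type*} [Fintype V] {G : SimpleGraph V} [DecidableRel G.Adj]

lemma Kfv_eq_of_sum_neighbor_effRes_eq (hG : G.Connected)
    (h : ∀ a b, ∑ y ∈ G.neighborFinset a, effRes G a y = ∑ y ∈ G.neighborFinset b, effRes G b y)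
    (a b : V) : Kfv G a = Kfv G b := by
  classical
  have hconst (w : V) : (G.lapMatrix ℝ *ᵥ Kfv G) w = (G.lapMatrix ℝ *ᵥ Kfv G) a := by
    rw [lapMatrix_mulVec_Kfv hG, lapMatrix_mulVec_Kfv hG, h w a]
  have hsum := sum_lapMatrix_mulVec_apply (G := G) (Kfv G)
  have hcard : (Fintype.card V : ℝ) ≠ 0 := Nat.cast_ne_zero.2 (Fintype.card_pos_iff.2 ⟨a⟩).ne'
  simp only [hconst, sum_const, card_univ, nsmul_eq_mul, mul_eq_zero, hcard, false_or] at hsum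
  exact eq_of_lapMatrix_mulVec_eq_zero hG (funext fun w => (hconst w).trans hsum) a b

lemma sum_neighbor_effRes_eq_two_mul (hG : G.Connected) {w a : V} (hw : G.degree w = 2)
    (ha : G.Adj w a) : ∑ y ∈ G.neighborFinset w, effRes G w y = 2 * effRes G w a := by
  classical
  obtain ⟨b, c, hbc, hN⟩ := card_eq_two.1 hw
  have heq := effRes_eq_of_neighborFinset_eq_pair hG hbc hN
  rw [← G.mem_neighborFinset, hN, mem_insert, mem_singleton] at ha
  rw [hN, sum_pair hbc]
  rcases ha with rfl | rfl <;> linarith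

lemma Kfv_eq_of_isRegularOfDegree_two (hG : G.Connected) (hreg : G.IsRegularOfDegree 2) (a b : V) :
    Kfv G a = Kfv G b := by
  refine Kfv_eq_of_sum_neighbor_effRes_eq hG (fun x y => ?_) a b
  obtain ⟨p⟩ := hG.preconnected x y
  induction p with
  | nil => rfl
  | @cons x z y hxz _ ih =>
    rw [← ih, sum_neighbor_effRes_eq_two_mul hG (hreg x) hxz,
      sum_neighbor_effRes_eq_two_mul hG (hreg z) hxz.symm, effRes_comm hG]

end Regular

end Transmission

section AddPendents

variable {V : Type*} {G : SimpleGraph V} {w : V} {r : ℕ}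

@[simp]
lemma addPendents_adj_inl_inl {x y : V} :
    (addPendents G w r).Adj (Sum.inl x) (Sum.inl y) ↔ G.Adj x y := by
  simpa [addPendents, G.adj_comm y x] using G.ne_of_adj

@[simp]
lemma addPendents_adj_inr {i : Fin r} {z : V ⊕ Fin r} :
    (addPendents G w r).Adj (Sum.inr i) z ↔ z = Sum.inl w := by
  cases z <;> simp [addPendents]

@[simp]
lemma addPendents_adj_inl_inr {x : V} {i : Fin r} :
    (addPendents G w r).Adj (Sum.inl x) (Sum.inr i) ↔ x = w := by
  rw [SimpleGraph.adj_comm, addPendents_adj_inr, Sum.inl.injEq]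

variable (G w r) in
/-- The inclusion of `G` into the graph with `r` pendent edges attached at `w`. -/
def embeddingAddPendents : G ↪g addPendents G w r :=
  ⟨.inl, addPendents_adj_inl_inl⟩

lemma connected_addPendents (hG : G.Connected) : (addPendents G w r).Connected := by
  have hinl (x : V) : (addPendents G w r).Reachable (Sum.inl w) (Sum.inl x) :=
    (hG.preconnected w x).map (embeddingAddPendents G w r).toHom
  refine (SimpleGraph.connected_iff_exists_forall_reachable _).2 ⟨Sum.inl w, ?_⟩
  rintro (x | i)
  · exact hinl x
  · exact SimpleGraph.Adj.reachable (addPendents_adj_inl_inr.2 rfl)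

section Finite

variable [Finite V]

lemma effRes_addPendents_inl_inl (hG : G.Connected) (x y : V) :
    effRes (addPendents G w r) (Sum.inl x) (Sum.inl y) = effRes G x y := by
  refine effRes_map_of_retraction (connected_addPendents hG) hG (embeddingAddPendents G w r)
    (ρ := Sum.elim id fun _ => w) (fun _ => rfl) ?_ x y
  rintro (x | i) hx z hz
  · exact absurd ⟨x, rfl⟩ hx
  · obtain rfl := addPendents_adj_inr.1 hz
    rfl

lemma Kfv_addPendents_inl (hG : G.Connected) (x : V) :
    Kfv (addPendents G w r) (Sum.inl x) = Kfv G x + r * (effRes G x w + 1) := by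
  have := Fintype.ofFinite V
  have hpendent (i : Fin r) :
      effRes (addPendents G w r) (Sum.inr i) (Sum.inl x) = effRes G x w + 1 := by
    have hG' := connected_addPendents (w := w) (r := r) hG
    rw [effRes_comm hG', effRes_leaf hG' (fun _ => addPendents_adj_inr) Sum.inl_ne_inr,
      effRes_addPendents_inl_inl hG]
  rw [Kfv_eq_sum, Kfv_eq_sum, Fintype.sum_sum_type]
  simp only [hpendent, effRes_addPendents_inl_inl hG, sum_const, card_univ, Fintype.card_fin,
    nsmul_eq_mul]

lemma Kfv_addPendents_inr (hG : G.Connected) (i : Fin r) :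
    Kfv (addPendents G w r) (Sum.inr i) = Kfv G w + Nat.card V + 2 * r - 2 := by
  rw [Kfv_leaf (connected_addPendents hG) fun _ => addPendents_adj_inr, Kfv_addPendents_inl hG,
    Nat.card_sum, Nat.card_fin, effRes_self]
  push_cast
  ring

end Finite

section Degree

variable [Fintype V] [DecidableRel (addPendents G w r).Adj]

lemma degree_addPendents_inl [DecidableEq V] [DecidableRel G.Adj] (x : V) :
    (addPendents G w r).degree (Sum.inl x) = G.degree x + if x = w then r else 0 := by
  have h := (addPendents G w r).degree_eq_sum_if_adj (R := ℕ) (Sum.inl x)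
  rw [Fintype.sum_sum_type] at h
  simpa [← G.degree_eq_sum_if_adj (R := ℕ)] using h

lemma degree_addPendents_inr (i : Fin r) : (addPendents G w r).degree (Sum.inr i) = 1 := by
  rw [SimpleGraph.degree_eq_one_iff_existsUnique_adj]
  exact ⟨Sum.inl w, by simp⟩

end Degree

lemma degRes_addPendents [Finite V] (hG : G.Connected) (w : V) (r : ℕ) :
    degRes (addPendents G w r) = degRes G + r * (Dv G w + 2 * Kfv G w) +
      r * (2 * G.edgeSet.ncard + Nat.card V + 3 * r - 2) := by
  classical
  have := Fintype.ofFinite V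
  have hdeg : ∑ x, (G.degree x : ℝ) = 2 * G.edgeSet.ncard := by
    rw [← G.coe_edgeFinset, Set.ncard_coe_finset]
    exact_mod_cast G.sum_degrees_eq_twice_card_edges
  have hV : ∑ x, ((G.degree x + if x = w then r else 0 : ℕ) : ℝ) *
      (Kfv G x + r * (effRes G x w + 1)) =
      degRes G + r * (Dv G w + Kfv G w + r) + r * (2 * G.edgeSet.ncard) := by
    have hsplit (x : V) : ((G.degree x + if x = w then r else 0 : ℕ) : ℝ) *
        (Kfv G x + r * (effRes G x w + 1)) =
        G.degree x * Kfv G x + r * (G.degree x * effRes G x w) + r * G.degree x +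
          if x = w then r * (Kfv G w + r) else 0 := by
      split_ifs with hx
      · subst hx
        rw [effRes_self]
        push_cast
        ring
      · push_cast
        ring
    rw [degRes_eq_sum_degree_mul_Kfv hG, Dv_eq_sum, ← hdeg, sum_congr rfl fun x _ => hsplit x]
    simp only [sum_add_distrib, ← mul_sum, sum_ite_eq', mem_univ, if_true]
    ring
  rw [degRes_eq_sum_degree_mul_Kfv (connected_addPendents hG), Fintype.sum_sum_type]
  simp only [Kfv_addPendents_inl hG, Kfv_addPendents_inr hG, degree_addPendents_inl,
    degree_addPendents_inr, hV, sum_const, card_univ, Fintype.card_fin, nsmul_eq_mul]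
  push_cast
  ring

end AddPendents

section EndCycle

variable {V : Type*} {G : SimpleGraph V}

lemma isCycleSubgraph_toSubgraph {a : V} {p : G.Walk a a} (hp : p.IsCycle) :
    IsCycleSubgraph p.toSubgraph :=
  ⟨p.toSubgraph_connected.coe, fun _ hx =>
    hp.ncard_neighborSet_toSubgraph_eq_two (p.mem_verts_toSubgraph.1 hx)⟩

/-- A chord would lie on a second cycle through both of its endpoints. -/
lemma IsCactus.isInduced_of_isCycleSubgraph (hG : IsCactus G) {C : G.Subgraph}
    (hC : IsCycleSubgraph C) : C.IsInduced := by
  intro x hx y hy hxy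
  by_contra hchord
  have hreach : (G.deleteEdges {s(x, y)}).Reachable x y := by
    let ι : C.coe →g G.deleteEdges {s(x, y)} :=
      ⟨(↑), fun {a b} hab => SimpleGraph.deleteEdges_adj.2 ⟨C.adj_sub hab, fun h =>
        hchord (C.mem_edgeSet.1 (Set.mem_singleton_iff.1 h ▸ C.mem_edgeSet.2 hab))⟩⟩
    exact (hC.1.preconnected ⟨x, hx⟩ ⟨y, hy⟩).map ι
  obtain ⟨a, p, hp, hmem⟩ :=
    SimpleGraph.adj_and_reachable_delete_edges_iff_exists_cycle.1 ⟨hxy, hreach⟩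
  have hpxy : p.toSubgraph.Adj x y := p.mem_edges_toSubgraph.2 hmem
  have hne : p.toSubgraph ≠ C := by
    rintro rfl
    exact hchord hpxy
  have hpair : {x, y} ⊆ p.toSubgraph.verts ∩ C.verts :=
    Set.pair_subset ⟨p.toSubgraph.edge_vert hpxy, hx⟩ ⟨p.toSubgraph.edge_vert hpxy.symm, hy⟩
  have hfin : (p.toSubgraph.verts ∩ C.verts).Finite := by
    rw [p.verts_toSubgraph]
    exact p.support.finite_toSet.inter_of_left _
  have hle := (Set.ncard_le_ncard hpair hfin).trans
    (hG.2 _ _ (isCycleSubgraph_toSubgraph hp) hC hne)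
  rw [Set.ncard_pair hxy.ne] at hle
  omega

lemma IsCycleSubgraph.degree_eq_two {C : G.Subgraph} (hC : IsCycleSubgraph C) {x : V}
    (hx : x ∈ C.verts) [Fintype (C.neighborSet x)] : C.degree x = 2 := by
  rw [← C.finset_card_neighborSet_eq_degree, ← Set.ncard_eq_toFinset_card']
  exact hC.2 x hx

lemma effRes_coe_subgraph [Finite V] (hG : G.Connected) {C : G.Subgraph} (hC : C.coe.Connected)
    (hind : C.IsInduced) {v : V} (hv : v ∈ C.verts)
    (hcut : ∀ x ∈ C.verts, ∀ y ∉ C.verts, G.Adj x y → x = v) (a b : C.verts) :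
    effRes G a b = effRes C.coe a b := by
  classical
  let ι : C.coe ↪g G := ⟨.subtype _, hind.adj.symm⟩
  refine effRes_map_of_retraction hG hC ι
    (ρ := fun x => if hx : x ∈ C.verts then ⟨x, hx⟩ else ⟨v, hv⟩)
    (fun x => dif_pos x.2) (fun x hx y hxy => ?_) a b
  have hxC : x ∉ C.verts := fun h => hx ⟨⟨x, h⟩, rfl⟩
  by_cases hyC : y ∈ C.verts
  · obtain rfl := hcut y hyC x hxC hxy.symm
    rw [dif_neg hxC, dif_pos hyC]
  · rw [dif_neg hxC, dif_neg hyC]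

lemma sum_mul_effRes_lt_of_cut_vertex [Fintype V] (hG : G.Connected) {S : Finset V} {u v : V}
    (hu : u ∈ S) (hv : v ∈ S) (huv : u ≠ v) (hcut : ∀ x ∈ S, ∀ y ∉ S, G.Adj x y → x = v)
    (hout : ∃ y, y ∉ S) {c : V → ℝ} (hc : ∀ x ∉ S, 0 < c x)
    (hS : ∑ x ∈ S, c x * effRes G x v ≤ ∑ x ∈ S, c x * effRes G x u) :
    ∑ x, c x * effRes G x v < ∑ x, c x * effRes G x u := by
  classical
  have hoff : ∑ x ∈ Sᶜ, c x * effRes G x v < ∑ x ∈ Sᶜ, c x * effRes G x u := by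
    obtain ⟨y, hy⟩ := hout
    refine sum_lt_sum_of_nonempty ⟨y, mem_compl.2 hy⟩ fun x hx => ?_
    rw [mem_compl] at hx
    have hfar : effRes G u x = effRes G u v + effRes G v x :=
      effRes_eq_add_of_cut_vertex (S := S) hG hv hcut hu hx
    rw [effRes_comm hG x v, effRes_comm hG x u, hfar]
    exact mul_lt_mul_of_pos_left (lt_add_of_pos_left _ (effRes_pos hG huv)) (hc x hx)
  rw [← sum_add_sum_compl S, ← sum_add_sum_compl S]
  exact add_lt_add_of_le_of_lt hS hoff

variable {C : G.Subgraph} {u v : V}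

lemma IsCycleSubgraph.sum_effRes_eq [Finite V] (hC : IsCycleSubgraph C) (hG : G.Connected)
    (hind : C.IsInduced) (hv : v ∈ C.verts)
    (hcut : ∀ x ∈ C.verts, ∀ y ∉ C.verts, G.Adj x y → x = v) [Fintype C.verts]
    (hu : u ∈ C.verts) :
    ∑ x ∈ C.verts.toFinset, effRes G x v = ∑ x ∈ C.verts.toFinset, effRes G x u := by
  classical
  have hKfv (z : C.verts) : ∑ x ∈ C.verts.toFinset, effRes G x z = Kfv C.coe z := by
    rw [Kfv_eq_sum, ← sum_set_coe]
    exact sum_congr rfl fun x _ => effRes_coe_subgraph hG hC.1 hind hv hcut x z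
  rw [hKfv ⟨v, hv⟩, hKfv ⟨u, hu⟩]
  refine Kfv_eq_of_isRegularOfDegree_two hC.1 (fun x => ?_) _ _
  rw [C.coe_degree]
  exact hC.degree_eq_two x.2

/-- The weight `d(x) + 2` is `4` off the anchor `v` and at least `4` at `v`, where `R(v, v) = 0`. -/
lemma IsCycleSubgraph.sum_degree_add_two_mul_effRes_le [Fintype V] [DecidableRel G.Adj]
    (hC : IsCycleSubgraph C) (hG : G.Connected) (hind : C.IsInduced) (hv : v ∈ C.verts)
    (hcut : ∀ x ∈ C.verts, ∀ y ∉ C.verts, G.Adj x y → x = v) [Fintype C.verts]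
    (hu : u ∈ C.verts) :
    ∑ x ∈ C.verts.toFinset, (G.degree x + 2 : ℝ) * effRes G x v ≤
      ∑ x ∈ C.verts.toFinset, (G.degree x + 2 : ℝ) * effRes G x u := by
  classical
  have hdeg_le {x : V} (hx : x ∈ C.verts) : 2 ≤ G.degree x := by
    rw [← hC.degree_eq_two hx]
    exact C.degree_le x
  have hdeg_eq {x : V} (hx : x ∈ C.verts) (hxv : x ≠ v) : G.degree x = 2 := by
    rw [← hC.degree_eq_two hx, ← G.card_neighborSet_eq_degree, SimpleGraph.Subgraph.degree]
    refine Fintype.card_congr (.setCongr (Set.ext fun y => ⟨fun hxy => ?_, C.adj_sub⟩))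
    exact hind hx (by_contra fun hy => hxv (hcut x hx y hy hxy)) hxy
  calc ∑ x ∈ C.verts.toFinset, (G.degree x + 2 : ℝ) * effRes G x v
    _ = 4 * ∑ x ∈ C.verts.toFinset, effRes G x v := by
      rw [mul_sum]
      refine sum_congr rfl fun x hx => ?_
      rcases eq_or_ne x v with rfl | hxv
      · rw [effRes_self, mul_zero, mul_zero]
      · rw [hdeg_eq (Set.mem_toFinset.1 hx) hxv]
        norm_num
    _ = 4 * ∑ x ∈ C.verts.toFinset, effRes G x u := by
      rw [hC.sum_effRes_eq hG hind hv hcut hu]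
    _ ≤ ∑ x ∈ C.verts.toFinset, (G.degree x + 2 : ℝ) * effRes G x u := by
      rw [mul_sum]
      refine sum_le_sum fun x hx => mul_le_mul_of_nonneg_right ?_ (effRes_nonneg hG x u)
      have : (2 : ℝ) ≤ G.degree x := mod_cast hdeg_le (Set.mem_toFinset.1 hx)
      linarith

end EndCycle

theorem stmt_3_general {V : Type*} [Finite V] {G : SimpleGraph V} (hG : G.Connected)
    {C : G.Subgraph} (hC : IsCycleSubgraph C) (hind : C.IsInduced) (hout : ∃ y, y ∉ C.verts)
    {u v : V} (hv : v ∈ C.verts) (hcut : ∀ x ∈ C.verts, ∀ y ∉ C.verts, G.Adj x y → x = v)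
    (hu : u ∈ C.verts) (huv : u ≠ v) {r : ℕ} (hr : 1 ≤ r) :
    degRes (addPendents G v r) < degRes (addPendents G u r) := by
  classical
  have := Fintype.ofFinite V
  have hDv (w : V) : Dv G w + 2 * Kfv G w = ∑ x, (G.degree x + 2 : ℝ) * effRes G x w := by
    rw [Dv_eq_sum, Kfv_eq_sum, mul_sum, ← sum_add_distrib]
    exact sum_congr rfl fun x _ => (add_mul _ _ _).symm
  have hlt : Dv G v + 2 * Kfv G v < Dv G u + 2 * Kfv G u := by
    rw [hDv, hDv]
    refine sum_mul_effRes_lt_of_cut_vertex (S := C.verts.toFinset) hG ?_ ?_ huv ?_ ?_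
      (fun x _ => by positivity) (hC.sum_degree_add_two_mul_effRes_le hG hind hv hcut hu) <;>
      simpa only [Set.mem_toFinset]
  rw [degRes_addPendents hG, degRes_addPendents hG]
  gcongr

/-- Lemma 5: in a cactus without cut edges, attaching `r` pendent edges at a
non-anchor vertex `u` of an end cycle gives a strictly larger degree resistance
distance than attaching them at the anchor `v`. -/
theorem stmt_3 {V : Type*} [Finite V] (n t : ℕ) (ht : 2 ≤ t)
    (G : SimpleGraph V) (hG : MemCact n t G)
    (hbridgeless : ∀ e ∈ G.edgeSet, ¬ G.IsBridge e)
    (C : G.Subgraph) (hC : IsCycleSubgraph C)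
    (v : V) (hvC : v ∈ C.verts)
    (hanchor : ∃ y ∉ C.verts, G.Adj v y)
    (huniq : ∀ x ∈ C.verts, (∃ y ∉ C.verts, G.Adj x y) → x = v)
    (u : V) (huC : u ∈ C.verts) (huv : u ≠ v)
    (r : ℕ) (hr : 1 ≤ r) :
    degRes (addPendents G v r) < degRes (addPendents G u r) :=
  stmt_3_general hG.1.1 hC (hG.1.isInduced_of_isCycleSubgraph hC) (hanchor.imp fun _ => And.left)
    hvC (fun x hx y hy hxy => huniq x hx ⟨y, hy, hxy⟩) huC huv hr
end

section
/- For integers n and t with n ≥ 2t + 1 and t ≥ 0, the degree resistance distance of G⁰(n,t) equals D_R(G⁰(n,t)) = −(4/3)t² + ((4/3)n − 14/3)t + 3n² − 7n + 4. -/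
open Finset

/-! Let `g` be the Green's function of a connected graph grounded at a vertex `o`: `g v` is the
potential produced by a unit current entering at `v` and leaving at `o`. By Cramer's rule the
determinant formula for `effRes` gives `R(u,v) = g u u + g v v - 2 * g u v`, so `degRes` only needs
the degrees, the diagonal of `g` and its row sums. If all cycles are triangles through a common
vertex `o` adjacent to all others, let `σ` swap the two outer vertices of each triangle and fix
everything else. Then away from `o` the Laplacian is `x ↦ 2 x - x ∘ σ - x o`, pendent vertices
included, and hence `g v = 2/3 δ_v + 1/3 δ_{σ v}`. -/

open Matrix

section Minors

variable {R m n k l : Type*} [CommRing R] [Fintype n]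

lemma submatrix_mulVec_comp_of_injective [Fintype k] (A : Matrix m n R) (f : l → m) {e : k → n}
    (he : Function.Injective e) {x : n → R} (hx : ∀ j ∉ Set.range e, x j = 0) :
    A.submatrix f e *ᵥ (x ∘ e) = (A *ᵥ x) ∘ f :=
  funext fun i => Fintype.sum_of_injective e he _ _ (fun j hj => by simp [hx j hj]) fun _ => rfl

variable [DecidableEq n]

lemma adjugate_apply_self_s6 (A : Matrix n n R) (i : n) :
    A.adjugate i i = det (A.submatrix ((↑) : {j // j ≠ i} → n) (↑)) := by
  have hcompl : toSquareBlockProp (A.updateRow i (Pi.single i 1)) (· ≠ i) =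
      A.submatrix ((↑) : {j // j ≠ i} → n) (↑) := by
    ext j k
    simp [toSquareBlockProp_def, updateRow_apply, j.2]
  have hpoint : toSquareBlockProp (A.updateRow i (Pi.single i 1)) (¬ · ≠ i) = 1 := by
    ext ⟨j, hj⟩ ⟨k, hk⟩
    obtain rfl := not_not.1 hj
    obtain rfl := not_not.1 hk
    simp [toSquareBlockProp_def]
  rw [adjugate_apply, twoBlockTriangular_det _ (· ≠ i), hcompl, hpoint, det_one, mul_one]
  intro j hj k hk
  obtain rfl := not_not.1 hj
  simp [hk]

lemma det_submatrix_ne_eq_det_mul {A : Matrix n n R} {i : n} {x : n → R}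
    (hx : A *ᵥ x = Pi.single i 1) :
    det (A.submatrix ((↑) : {j // j ≠ i} → n) (↑)) = A.det * x i := by
  have hcramer : A.adjugate *ᵥ (A *ᵥ x) = A.det • x := by
    rw [mulVec_mulVec, adjugate_mul, smul_mulVec, one_mulVec]
  rw [hx, mulVec_single_one] at hcramer
  rw [← adjugate_apply_self_s6]
  exact congrFun hcramer i

lemma det_submatrix_ne_and_ne_eq_det_mul {A : Matrix n n R} {u v : n} (huv : u ≠ v) {x : n → R}
    (hxu : x u = 0) (hx : ∀ w ≠ u, (A *ᵥ x) w = (Pi.single v 1 : n → R) w) :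
    det (A.submatrix ((↑) : {w // w ≠ u ∧ w ≠ v} → n) (↑)) =
      det (A.submatrix ((↑) : {w // w ≠ u} → n) (↑)) * x v := by
  let B : Matrix {w // w ≠ u} {w // w ≠ u} R := A.submatrix (↑) (↑)
  let v' : {w // w ≠ u} := ⟨v, huv.symm⟩
  have hB : B *ᵥ (x ∘ Subtype.val) = Pi.single v' 1 := by
    rw [submatrix_mulVec_comp_of_injective _ _ Subtype.val_injective (by simpa using hxu)]
    funext w
    simp [hx w w.2, Pi.single_apply, v', Subtype.ext_iff]
  let e : {w // w ≠ u ∧ w ≠ v} ≃ {w // w ≠ v'} :=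
    (Equiv.subtypeSubtypeEquivSubtypeInter (· ≠ u) (· ≠ v)).symm.trans
      (Equiv.subtypeEquivRight fun w => by simp [v', Subtype.ext_iff])
  calc
    _ = det (B.submatrix ((↑) : {w // w ≠ v'} → {w // w ≠ u}) (↑)) :=
      det_submatrix_equiv_self e _
    _ = _ := det_submatrix_ne_eq_det_mul hB

end Minors

section EffectiveResistance

variable {V : Type*} [Fintype V] [DecidableEq V] {G : SimpleGraph V} [DecidableRel G.Adj]

lemma sum_lapMatrix_mulVec {R : Type*} [CommRing R] (x : V → R) :
    ∑ w, (G.lapMatrix R *ᵥ x) w = 0 := by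
  have h : 1 ⬝ᵥ (G.lapMatrix R *ᵥ x) = 0 := by
    rw [dotProduct_mulVec, ← mulVec_transpose, G.isSymm_lapMatrix R]
    exact (congrArg (· ⬝ᵥ x) G.lapMatrix_mulVec_const_eq_zero).trans (zero_dotProduct x)
  rwa [one_dotProduct] at h

lemma lapMatrix_mulVec_eq_of_forall_ne {R : Type*} [CommRing R] {o : V} {x b : V → R}
    (hb : ∑ w, b w = 0) (h : ∀ w ≠ o, (G.lapMatrix R *ᵥ x) w = b w) :
    G.lapMatrix R *ᵥ x = b := by
  funext w
  by_cases hw : w = o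
  · have hsum : ∑ w, ((G.lapMatrix R *ᵥ x) w - b w) = 0 := by
      rw [sum_sub_distrib, sum_lapMatrix_mulVec, hb, sub_zero]
    rw [Fintype.sum_eq_single o fun w hw => sub_eq_zero.2 (h w hw)] at hsum
    rw [hw, sub_eq_zero.1 hsum]
  · exact h w hw

lemma det_submatrix_lapMatrix_ne_zero (hG : G.Preconnected) (u : V) :
    det ((G.lapMatrix ℝ).submatrix ((↑) : {w // w ≠ u} → V) (↑)) ≠ 0 := by
  intro hdet
  obtain ⟨y, hy_ne, hy⟩ := exists_mulVec_eq_zero_iff.2 hdet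
  let x : V → ℝ := Function.extend Subtype.val y 0
  have hxy : x ∘ Subtype.val = y := Function.extend_comp Subtype.val_injective y _
  have hx_compl (w) (hw : w ∉ Set.range (Subtype.val : {w // w ≠ u} → V)) : x w = 0 :=
    Function.extend_apply' y _ w hw
  have hharm : G.lapMatrix ℝ *ᵥ x = 0 := by
    refine lapMatrix_mulVec_eq_of_forall_ne (o := u) (by simp) fun w hw => ?_
    have hreduced := submatrix_mulVec_comp_of_injective (G.lapMatrix ℝ)
      (Subtype.val : {w // w ≠ u} → V) Subtype.val_injective hx_compl
    rw [hxy, hy] at hreduced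
    exact (congrFun hreduced ⟨w, hw⟩).symm
  have hconst := G.lapMatrix_mulVec_eq_zero_iff_forall_reachable.1 hharm
  refine hy_ne (hxy ▸ funext fun w => ?_)
  exact (hconst w u (hG w u)).trans (hx_compl u (by simp))

lemma effRes_of_ne {u v : V} (huv : u ≠ v) :
    effRes G u v =
      det ((G.lapMatrix ℝ).submatrix ((↑) : {w // w ≠ u ∧ w ≠ v} → V) (↑))
      / det ((G.lapMatrix ℝ).submatrix ((↑) : {w // w ≠ u} → V) (↑)) := by
  unfold effRes
  simp only [if_neg huv]
  congr!

theorem effRes_eq_sub_of_lapMatrix_mulVec (hG : G.Preconnected) {u v : V} {x : V → ℝ}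
    (hx : G.lapMatrix ℝ *ᵥ x = Pi.single v 1 - Pi.single u 1) : effRes G u v = x v - x u := by
  obtain rfl | huv := eq_or_ne u v
  · simp [effRes]
  let y : V → ℝ := x - fun _ => x u
  have hy : G.lapMatrix ℝ *ᵥ y = G.lapMatrix ℝ *ᵥ x := by
    have hconst : (fun _ : V => x u) = x u • fun _ => 1 := by ext; simp
    rw [mulVec_sub, hconst, mulVec_smul, G.lapMatrix_mulVec_const_eq_zero, smul_zero, sub_zero]
  have hdet := det_submatrix_ne_and_ne_eq_det_mul huv (A := G.lapMatrix ℝ) (x := y)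
    (sub_self (x u)) fun w hw => by simp [hy, hx, hw]
  rw [effRes_of_ne huv, hdet, mul_div_cancel_left₀ _ (det_submatrix_lapMatrix_ne_zero hG u)]
  rfl

omit [DecidableEq V] in
lemma degRes_eq_half_sum :
    degRes G = 1 / 2 * ∑ u, ∑ v, ((G.degree u : ℝ) + G.degree v) * effRes G u v := by
  unfold degRes
  congr!

/-- `g` is the Green's function of `G` grounded at `o`: `g v` is the electric potential produced by
a unit current entering at `v` and leaving at `o`, normalised to vanish at `o`. -/
structure IsGreenFunction (G : SimpleGraph V) [DecidableRel G.Adj] (o : V) (g : V → V → ℝ) :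
    Prop where
  apply_ground (v : V) : g v o = 0
  lapMatrix_mulVec (v : V) : G.lapMatrix ℝ *ᵥ g v = Pi.single v 1 - Pi.single o 1

namespace IsGreenFunction

variable {o : V} {g : V → V → ℝ}

lemma symm (hg : IsGreenFunction G o g) (u v : V) : g u v = g v u := by
  have hdot (a b : V) : g a ⬝ᵥ (G.lapMatrix ℝ *ᵥ g b) = g a b := by
    simp [hg.lapMatrix_mulVec, hg.apply_ground, dotProduct_sub]
  calc g u v = g u ⬝ᵥ (G.lapMatrix ℝ *ᵥ g v) := (hdot u v).symm
    _ = g v ⬝ᵥ (G.lapMatrix ℝ *ᵥ g u) := by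
      rw [dotProduct_mulVec, ← mulVec_transpose, G.isSymm_lapMatrix ℝ, dotProduct_comm]
    _ = g v u := hdot v u

lemma effRes_eq (hg : IsGreenFunction G o g) (hG : G.Preconnected) (u v : V) :
    effRes G u v = g u u + g v v - 2 * g u v := by
  have hx : G.lapMatrix ℝ *ᵥ (g v - g u) = Pi.single v 1 - Pi.single u 1 := by
    rw [mulVec_sub, hg.lapMatrix_mulVec, hg.lapMatrix_mulVec, sub_sub_sub_cancel_right]
  rw [effRes_eq_sub_of_lapMatrix_mulVec hG hx, Pi.sub_apply, Pi.sub_apply, hg.symm v u]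
  ring

theorem degRes_eq (hg : IsGreenFunction G o g) (hG : G.Preconnected) :
    degRes G = Fintype.card V * ∑ u, G.degree u * g u u
      + (∑ u, (G.degree u : ℝ)) * ∑ u, g u u - 2 * ∑ u, G.degree u * ∑ v, g u v := by
  have hswap : ∑ u, ∑ v, (G.degree v : ℝ) * effRes G u v
      = ∑ u, ∑ v, (G.degree u : ℝ) * effRes G u v := by
    rw [sum_comm]
    refine sum_congr rfl fun u _ => sum_congr rfl fun v _ => ?_
    rw [hg.effRes_eq hG, hg.effRes_eq hG, hg.symm v u]
    ring
  calc degRes G = ∑ u, ∑ v, (G.degree u : ℝ) * effRes G u v := by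
        simp only [degRes_eq_half_sum, add_mul, sum_add_distrib, hswap]
        ring
    _ = ∑ u, (Fintype.card V * (G.degree u * g u u) + G.degree u * ∑ v, g v v
          - 2 * (G.degree u * ∑ v, g u v)) := by
        refine sum_congr rfl fun u _ => ?_
        simp only [hg.effRes_eq hG, ← mul_sum, sum_sub_distrib, sum_add_distrib, sum_const,
          card_univ, nsmul_eq_mul]
        ring
    _ = _ := by simp only [sum_sub_distrib, sum_add_distrib, ← mul_sum, ← sum_mul]

end IsGreenFunction

end EffectiveResistance

section Windmill

variable {V : Type*} {G : SimpleGraph V} {o : V} {σ : Equiv.Perm V}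

/-- `G` consists of triangles and pendent edges sharing the single vertex `o`. The involution `σ`
swaps the two outer vertices of each triangle and fixes `o` and the pendent vertices. -/
structure IsWindmill (G : SimpleGraph V) (o : V) (σ : Equiv.Perm V) : Prop where
  map_hub : σ o = o
  involutive : Function.Involutive σ
  adj_iff (u v : V) : G.Adj u v ↔ u ≠ v ∧ (u = o ∨ v = o ∨ v = σ u)

/-- The Green's function grounded at the hub `o` of the windmill with involution `σ`. -/
noncomputable def windmillGreen [DecidableEq V] (o : V) (σ : Equiv.Perm V) (v : V) : V → ℝ :=
  if v = o then 0 else Pi.single v (2 / 3) + Pi.single (σ v) (1 / 3)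

lemma windmillGreen_apply_self [DecidableEq V] (u : V) : windmillGreen o σ u u =
    if u = o then 0 else if σ u = u then 1 else 2 / 3 := by
  unfold windmillGreen
  split_ifs with hu hfix
  · rfl
  · rw [Pi.add_apply, hfix, Pi.single_eq_same, Pi.single_eq_same]
    norm_num
  · simp [Ne.symm hfix]

lemma sum_windmillGreen [Fintype V] [DecidableEq V] (u : V) :
    ∑ v, windmillGreen o σ u v = if u = o then 0 else 1 := by
  unfold windmillGreen
  split_ifs
  · simp
  · simp only [Pi.add_apply, sum_add_distrib, sum_pi_single', mem_univ, if_true]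
    norm_num

lemma sum_ite_eq_ite_fixed {R : Type*} [CommRing R] [Fintype V] [DecidableEq V] (ho : σ o = o)
    (a b c : R) :
    ∑ u, (if u = o then a else if σ u = u then b else c)
      = a + (Fintype.card V - 1 - #σ.support) * b + #σ.support * c := by
  have hsplit (u : V) : (if u = o then a else if σ u = u then b else c)
      = b + (if u = o then a - b else 0) + (if u ∈ σ.support then c - b else 0) := by
    split_ifs <;> simp_all
  simp only [hsplit, sum_add_distrib, sum_const, card_univ, sum_ite_eq', mem_univ, if_true,
    sum_ite_mem, univ_inter, nsmul_eq_mul]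
  ring

namespace IsWindmill

lemma map_ne_hub (hG : IsWindmill G o σ) {u : V} (hu : u ≠ o) : σ u ≠ o := fun h =>
  hu (σ.injective (h.trans hG.map_hub.symm))

lemma preconnected (hG : IsWindmill G o σ) : G.Preconnected := by
  have hreach (w : V) : G.Reachable o w := by
    obtain rfl | hw := eq_or_ne o w
    · rfl
    · exact ((hG.adj_iff o w).2 ⟨hw, .inl rfl⟩).reachable
  exact fun u v => (hreach u).symm.trans (hreach v)

variable [Fintype V] [DecidableEq V] [DecidableRel G.Adj]

lemma neighborFinset_hub (hG : IsWindmill G o σ) : G.neighborFinset o = univ.erase o := by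
  ext w
  simp [hG.adj_iff, eq_comm]

lemma neighborFinset_of_ne (hG : IsWindmill G o σ) {u : V} (hu : u ≠ o) :
    G.neighborFinset u = ({o, σ u} : Finset V).erase u := by
  ext w
  simp [hG.adj_iff, hu, eq_comm]

lemma degree_eq (hG : IsWindmill G o σ) (u : V) : (G.degree u : ℝ) =
    if u = o then (Fintype.card V : ℝ) - 1 else if σ u = u then 1 else 2 := by
  rw [← G.card_neighborFinset_eq_degree]
  split_ifs with hu hfix
  · rw [hu, hG.neighborFinset_hub, cast_card_erase_of_mem (mem_univ o), card_univ]
  · rw [hG.neighborFinset_of_ne hu, cast_card_erase_of_mem (by simp [hfix]),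
      card_pair (hG.map_ne_hub hu).symm]
    norm_num
  · rw [hG.neighborFinset_of_ne hu, erase_eq_of_notMem (by simp [hu, Ne.symm hfix]),
      card_pair (hG.map_ne_hub hu).symm]
    norm_num

lemma lapMatrix_mulVec_apply (hG : IsWindmill G o σ) {u : V} (hu : u ≠ o) (x : V → ℝ) :
    (G.lapMatrix ℝ *ᵥ x) u = 2 * x u - x (σ u) - x o :=
  calc (G.lapMatrix ℝ *ᵥ x) u = ∑ w ∈ G.neighborFinset u, (x u - x w) := by
        rw [G.lapMatrix_mulVec_apply, sum_sub_distrib, sum_const, nsmul_eq_mul,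
          G.card_neighborFinset_eq_degree]
    _ = ∑ w ∈ {o, σ u}, (x u - x w) := by
        rw [hG.neighborFinset_of_ne hu, sum_erase (f := (x u - x ·)) _ (sub_self _)]
    _ = 2 * x u - x (σ u) - x o := by
        rw [sum_pair (hG.map_ne_hub hu).symm]
        ring

lemma isGreenFunction (hG : IsWindmill G o σ) : IsGreenFunction G o (windmillGreen o σ) where
  apply_ground v := by
    by_cases hv : v = o
    · simp [windmillGreen, hv]
    · simp [windmillGreen, hv, Ne.symm hv, (hG.map_ne_hub hv).symm]
  lapMatrix_mulVec v := by
    by_cases hv : v = o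
    · simp [windmillGreen, hv]
    refine lapMatrix_mulVec_eq_of_forall_ne (o := o) (by simp) fun w hw => ?_
    have hmate : σ w = v ↔ w = σ v := hG.involutive.eq_iff
    rw [hG.lapMatrix_mulVec_apply hw]
    simp only [windmillGreen, hv, if_false, Pi.add_apply, Pi.sub_apply, Pi.single_apply, hmate,
      σ.injective.eq_iff, Ne.symm hv, (hG.map_ne_hub hv).symm, hw]
    split_ifs <;> norm_num

end IsWindmill

theorem stmt_6_general [Fintype V] [DecidableEq V] (hG : IsWindmill G o σ) {t : ℕ}
    (ht : #σ.support = 2 * t) :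
    degRes G = -(4 / 3) * (t : ℝ) ^ 2 + ((4 / 3) * (Fintype.card V : ℝ) - 14 / 3) * t
      + 3 * (Fintype.card V : ℝ) ^ 2 - 7 * Fintype.card V + 4 := by
  classical
  have hdiag (u : V) : G.degree u * windmillGreen o σ u u =
      if u = o then 0 else if σ u = u then (1 : ℝ) else 4 / 3 := by
    rw [hG.degree_eq, windmillGreen_apply_self]
    split_ifs <;> norm_num
  have hrow (u : V) : G.degree u * ∑ v, windmillGreen o σ u v =
      if u = o then 0 else if σ u = u then (1 : ℝ) else 2 := by
    rw [hG.degree_eq, sum_windmillGreen]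
    split_ifs <;> norm_num
  rw [hG.isGreenFunction.degRes_eq hG.preconnected, sum_congr rfl fun u _ => hdiag u,
    sum_congr rfl fun u _ => hrow u]
  simp only [hG.degree_eq, windmillGreen_apply_self, sum_ite_eq_ite_fixed hG.map_hub, ht]
  push_cast
  ring

end Windmill

section TriangleMate

variable {n t : ℕ}

/-- The other outer vertex of the triangle of `G0 n t` through `a`, and `a` itself if `a` is the hub
or a pendent vertex. -/
def triangleMate (h : 2 * t < n) (a : Fin n) : Fin n where
  val := if 1 ≤ a.val ∧ a.val ≤ 2 * t then if Odd a.val then a.val + 1 else a.val - 1 else a.val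
  isLt := by grind

lemma triangleMate_involutive (h : 2 * t < n) : Function.Involutive (triangleMate h) := by
  intro a
  simp only [triangleMate, Fin.ext_iff, Nat.odd_iff]
  split_ifs <;> omega

lemma isWindmill_G0 (h : 2 * t < n) :
    IsWindmill (G0 n t) ⟨0, by omega⟩ (triangleMate_involutive h).toPerm where
  map_hub := by simp [triangleMate]
  involutive := triangleMate_involutive h
  adj_iff u v := by
    simp only [G0, SimpleGraph.fromRel_adj, triangleMate, Function.Involutive.coe_toPerm,
      Fin.ext_iff, ne_eq, Nat.odd_iff]
    split_ifs <;> omega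

lemma card_support_triangleMate (h : 2 * t < n) :
    #(triangleMate_involutive h).toPerm.support = 2 * t := by
  have hmap : (triangleMate_involutive h).toPerm.support.map Fin.valEmbedding = Icc 1 (2 * t) := by
    ext a
    simp only [mem_map, Equiv.Perm.mem_support, Function.Involutive.coe_toPerm, triangleMate,
      ne_eq, Fin.ext_iff, Fin.valEmbedding_apply, Fin.exists_iff, mem_Icc]
    grind
  rw [← card_map Fin.valEmbedding, hmap, Nat.card_Icc, Nat.add_sub_cancel]

end TriangleMate

/-- Corrected Theorem 1: the degree resistance distance of `G⁰(n,t)`. -/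
theorem stmt_6 (n t : ℕ) (h1 : 2 * t + 1 ≤ n) :
    degRes (G0 n t) = -(4 / 3) * (t : ℝ) ^ 2 + ((4 / 3) * (n : ℝ) - 14 / 3) * t
      + 3 * (n : ℝ) ^ 2 - 7 * n + 4 := by
  simpa using stmt_6_general (isWindmill_G0 h1) (card_support_triangleMate h1)
end
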